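/- For each positive integer n, ∑_{T ∈ B(n)} f^{T̂} · ∏_{v ∈ T} 1/2^{2h_v - 1} = 1, where the sum is over all binary trees T with n vertices, T̂ is the completion of T, f^{T̂} is the number of increasing labelings of T̂, and h_v is the hook length of v in T. -/

import Mathlib

/-- A binary tree: `nil` is the empty tree, and a vertex may have an empty or
nonempty left subtree and an empty or nonempty right subtree.  The binary
trees with `n` vertices are the `T : BinTree` with `T.size = n`. -/
inductive BinTree : Type where
  | nil : BinTree
  | node (l r : BinTree) : BinTree
deriving DecidableEq

/-- The number of vertices of a binary tree. -/
def BinTree.size : BinTree → ℕ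
  | .nil => 0
  | .node l r => l.size + r.size + 1

/-- The product, over all vertices `v` of a binary tree, of `f h_v`, where
`h_v` is the hook length of `v` (the number of descendants of `v`, including
`v` itself). -/
def BinTree.hookProd (f : ℕ → ℝ) : BinTree → ℝ
  | .nil => 1
  | .node l r => f (l.size + r.size + 1) * l.hookProd f * r.hookProd f

/-- The vertices of a binary tree, encoded as paths from the root
(`false` = go to left child, `true` = go to right child). -/
def BinTree.positions : BinTree → List (List Bool)
  | .nil => []
  | .node l r =>
      [] :: (l.positions.map (fun p => false :: p) ++ r.positions.map (fun p => true :: p))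

/-- The number `f^T` of increasing labelings of a binary tree `T`: bijections
`ℓ` from the vertices of `T` to `{1, …, |T|}` (here `Fin T.size`) such that
`ℓ v < ℓ w` whenever `w` is a child of `v`. -/
noncomputable def BinTree.incLabelings (T : BinTree) : ℕ :=
  Nat.card {ℓ : {p // p ∈ T.positions} → Fin T.size //
    Function.Bijective ℓ ∧
    ∀ v w : {p // p ∈ T.positions}, (∃ b, (w : List Bool) = (v : List Bool) ++ [b]) → ℓ v < ℓ w}

/-- The completion `T̂` of a binary tree `T`: the complete binary tree on
`2|T|+1` vertices obtained from `T` by adding all `|T|+1` possible leaves. -/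
def BinTree.completion : BinTree → BinTree
  | .nil => .node .nil .nil
  | .node l r => .node l.completion r.completion

/-!
Ordered by ancestry, the vertices of a binary tree with subtrees `l` and `r` are the disjoint union
of those of `l` and `r` with a root added below. Adding a bottom element to a poset does not change
the number of increasing labelings, and a labeling of a disjoint union is a choice of labels for the
left summand together with labelings of both summands; hence
`f^{node l r} = (|l| + |r|).choose |l| * f^l * f^r`.

For completions, where `|T̂| = 2|T| + 1`, a root whose subtrees have `i` and `j` vertices
therefore contributes to the summand the factor
`(2(i + j) + 2).choose (2i + 1) / 2 ^ (2(i + j) + 1)`. Summed over `i + j = n` these factors give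
`1`, because half of the subsets of a set with `2n + 2` elements have odd size. So they are
the splitting probabilities of a random binary tree, and the sum is its total probability.
-/

/-- The increasing labelings of a poset `P` by an ordered set `α` of labels, i.e. the linear
extensions of `P` when `α` is a chain. -/
abbrev IncLabeling (P α : Type*) [Preorder P] [Preorder α] :=
  {e : P ≃ α // StrictMono e}

/-- The number of increasing labelings of a finite poset `P` by `0 < 1 < ⋯ < |P| - 1`. -/
noncomputable def numIncLabelings (P : Type*) [Preorder P] : ℕ :=
  Nat.card (IncLabeling P (Fin (Nat.card P)))

namespace IncLabeling

variable {P Q α β : Type*} [Preorder P] [Preorder Q] [Preorder α] [Preorder β]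

/-- Transport of increasing labelings along isomorphisms of the poset and of the labels. -/
def congr (e : P ≃o Q) (f : α ≃o β) : IncLabeling P α ≃ IncLabeling Q β :=
  (Equiv.equivCongr e.toEquiv f.toEquiv).subtypeEquiv fun ℓ ↦
    ⟨fun h ↦ (f.strictMono.comp h).comp e.symm.strictMono, fun h v w hvw ↦ by
      simpa using h (e.strictMono hvw)⟩

/-- The increasing labeling of `WithBot P` that labels the new bottom element by `⊥`. -/
def withBot (ℓ : IncLabeling P α) : IncLabeling (WithBot P) (WithBot α) :=
  ⟨ℓ.1.withBotCongr, WithBot.strictMono_map_iff.2 ℓ.2⟩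

lemma apply_bot (ℓ : IncLabeling (WithBot P) (WithBot α)) : ℓ.1 ⊥ = ⊥ := by
  by_contra hne
  have hlt : ⊥ < ℓ.1.symm ⊥ := WithBot.bot_lt_iff_ne_bot.2 fun h ↦ hne (by simp [← h])
  simpa using ℓ.2 hlt

lemma withBot_bijective :
    Function.Bijective (withBot : IncLabeling P α → IncLabeling (WithBot P) (WithBot α)) := by
  refine ⟨fun ℓ ℓ' h ↦ Subtype.ext (Equiv.optionCongr_injective (congrArg Subtype.val h)),
    fun ℓ ↦ ?_⟩
  have coe_removeNone (v : P) : ((Equiv.removeNone ℓ.1 v : α) : WithBot α) = ℓ.1 v :=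
    Equiv.removeNone_some ℓ.1 <| WithBot.ne_bot_iff_exists.1 (fun h ↦
      WithBot.coe_ne_bot (ℓ.1.injective (h.trans ℓ.apply_bot.symm))) |>.imp fun _ ↦ Eq.symm
  refine ⟨⟨Equiv.removeNone ℓ.1, fun v w hvw ↦ ?_⟩, ?_⟩
  · rw [← WithBot.coe_lt_coe, coe_removeNone, coe_removeNone]
    exact ℓ.2 (WithBot.coe_lt_coe.2 hvw)
  · ext1
    ext1 v
    cases v with
    | bot => exact ℓ.apply_bot.symm
    | coe v => exact coe_removeNone v

variable [Fintype P]

/-- The set of labels used on the left summand. -/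
def leftLabels (ℓ : IncLabeling (P ⊕ Q) α) : Finset α :=
  Finset.univ.map (Function.Embedding.inl.trans ℓ.1.toEmbedding)

lemma apply_mem_leftLabels (ℓ : IncLabeling (P ⊕ Q) α) (x : P ⊕ Q) :
    ℓ.1 x ∈ ℓ.leftLabels ↔ x.isLeft := by
  cases x <;> simp [leftLabels]

lemma card_leftLabels (ℓ : IncLabeling (P ⊕ Q) α) : ℓ.leftLabels.card = Fintype.card P := by
  simp [leftLabels]

/-- Increasing labelings of a disjoint union with prescribed set `S` of labels on the left are
pairs of increasing labelings, of the left summand by `S` and of the right one by `Sᶜ`. -/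
def leftLabelsFiberEquiv [DecidableEq α] (S : Finset α) :
    {ℓ : IncLabeling (P ⊕ Q) α // ℓ.leftLabels = S} ≃
      IncLabeling P {a // a ∈ S} × IncLabeling Q {a // a ∉ S} where
  toFun := fun ⟨ℓ, hℓ⟩ ↦
    (⟨Equiv.sumIsLeft.symm.trans (ℓ.1.subtypeEquiv fun x ↦ by
        rw [← hℓ, apply_mem_leftLabels]), fun _ _ h ↦ ℓ.2 (Sum.inl_lt_inl_iff.2 h)⟩,
      ⟨Equiv.sumIsRight.symm.trans (ℓ.1.subtypeEquiv fun x ↦ by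
        rw [← hℓ, apply_mem_leftLabels, Bool.not_eq_true, Sum.isLeft_eq_false]),
        fun _ _ h ↦ ℓ.2 (Sum.inr_lt_inr_iff.2 h)⟩)
  invFun fg :=
    ⟨⟨(fg.1.1.sumCongr fg.2.1).trans (Equiv.sumCompl (· ∈ S)), by
      rintro (v | v) (w | w) h
      · exact fg.1.2 (Sum.inl_lt_inl_iff.1 h)
      · exact absurd h Sum.not_inl_lt_inr
      · exact absurd h Sum.not_inr_lt_inl
      · exact fg.2.2 (Sum.inr_lt_inr_iff.1 h)⟩, by
      ext a
      simpa [leftLabels] using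
        ⟨fun ⟨v, hv⟩ ↦ hv ▸ (fg.1.1 v).2, fun ha ↦ ⟨fg.1.1.symm ⟨a, ha⟩, by simp⟩⟩⟩
  left_inv ℓ := by
    ext1; ext1; ext (v | v) <;> rfl
  right_inv fg := by
    ext <;> rfl

end IncLabeling

section numIncLabelings

variable {P Q : Type*} [Preorder P] [Preorder Q]

lemma card_incLabeling {α : Type*} [LinearOrder α] [Finite α] (h : Nat.card α = Nat.card P) :
    Nat.card (IncLabeling P α) = numIncLabelings P := by
  have := Fintype.ofFinite α
  exact Nat.card_congr <| IncLabeling.congr (OrderIso.refl P) <|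
    (Fintype.orderIsoFinOfCardEq α (Nat.card_eq_fintype_card.symm.trans h)).symm

lemma numIncLabelings_congr (e : P ≃o Q) : numIncLabelings P = numIncLabelings Q :=
  (Nat.card_congr (IncLabeling.congr e (OrderIso.refl _))).trans
    (card_incLabeling (by simp [Nat.card_congr e.toEquiv]))

lemma numIncLabelings_of_isEmpty [IsEmpty P] : numIncLabelings P = 1 := by
  have hα : IsEmpty (Fin (Nat.card P)) := by simpa using Fin.isEmpty
  have : Unique (IncLabeling P (Fin (Nat.card P))) :=
    { default := ⟨Equiv.equivOfIsEmpty _ _, fun v ↦ isEmptyElim v⟩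
      uniq := fun ℓ ↦ Subtype.ext (Subsingleton.elim _ _) }
  exact Nat.card_unique

lemma numIncLabelings_withBot [Finite P] :
    numIncLabelings (WithBot P) = numIncLabelings P := by
  have hcard : Nat.card (WithBot (Fin (Nat.card P))) = Nat.card (WithBot P) :=
    Nat.card_congr (Finite.equivFin P).symm.withBotCongr
  rw [← card_incLabeling hcard]
  exact (Nat.card_eq_of_bijective _ IncLabeling.withBot_bijective).symm

lemma IncLabeling.card_leftLabels_fiber {α : Type*} [LinearOrder α] [Finite α] [Fintype P]
    (hα : Nat.card α = Nat.card P + Nat.card Q) {S : Finset α} (hS : S.card = Nat.card P) :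
    Nat.card {ℓ : IncLabeling (P ⊕ Q) α // ℓ.leftLabels = S} =
      numIncLabelings P * numIncLabelings Q := by
  have := Fintype.ofFinite α
  have hcompl : Nat.card {a // a ∉ S} = Nat.card Q := by
    rw [Nat.card_eq_fintype_card, Fintype.card_subtype_compl, Fintype.card_coe, hS,
      ← Nat.card_eq_fintype_card, hα, Nat.add_sub_cancel_left]
  rw [Nat.card_congr (IncLabeling.leftLabelsFiberEquiv S), Nat.card_prod,
    card_incLabeling (by simpa using hS), card_incLabeling hcompl]

lemma numIncLabelings_sum [Finite P] [Finite Q] :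
    numIncLabelings (P ⊕ Q) = (Nat.card P + Nat.card Q).choose (Nat.card P) *
      (numIncLabelings P * numIncLabelings Q) := by
  have := Fintype.ofFinite P
  let leftLabels (ℓ : IncLabeling (P ⊕ Q) (Fin (Nat.card (P ⊕ Q)))) :
      Set.powersetCard (Fin (Nat.card (P ⊕ Q))) (Nat.card P) :=
    ⟨ℓ.leftLabels, by simp [ℓ.card_leftLabels]⟩
  rw [numIncLabelings, ← Nat.card_congr (Equiv.sigmaFiberEquiv leftLabels), Nat.card_sigma]
  have card_fiber (S : Set.powersetCard (Fin (Nat.card (P ⊕ Q))) (Nat.card P)) :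
      Nat.card {ℓ // leftLabels ℓ = S} = numIncLabelings P * numIncLabelings Q := by
    simp only [leftLabels, Subtype.ext_iff]
    exact IncLabeling.card_leftLabels_fiber (by simp) (Set.powersetCard.card_eq S)
  simp only [card_fiber, Finset.sum_const, Finset.card_univ, smul_eq_mul,
    ← Nat.card_eq_fintype_card, Set.powersetCard.card, Nat.card_sum, Nat.card_fin]

end numIncLabelings

namespace BinTree

section Positions

variable {l r T : BinTree} {p q : List Bool}

lemma nil_mem_positions_node : [] ∈ (node l r).positions := by
  simp [positions]

lemma false_cons_mem_positions_node : false :: p ∈ (node l r).positions ↔ p ∈ l.positions := by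
  simp [positions]

lemma true_cons_mem_positions_node : true :: p ∈ (node l r).positions ↔ p ∈ r.positions := by
  simp [positions]

lemma mem_positions_of_isPrefix (hpq : p <+: q) (hq : q ∈ T.positions) : p ∈ T.positions := by
  induction T generalizing p q with
  | nil => simp [positions] at hq
  | node l r ihl ihr =>
    rcases p with _ | ⟨_ | _, p⟩
    · exact nil_mem_positions_node
    · obtain ⟨q, rfl, hpq'⟩ := List.cons_prefix_iff.1 hpq
      exact false_cons_mem_positions_node.2 (ihl hpq' (false_cons_mem_positions_node.1 hq))
    · obtain ⟨q, rfl, hpq'⟩ := List.cons_prefix_iff.1 hpq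
      exact true_cons_mem_positions_node.2 (ihr hpq' (true_cons_mem_positions_node.1 hq))

end Positions

/-- The vertices of `T`, encoded as paths from the root and partially ordered by ancestry. This is
a structure rather than a subtype, so that it does not inherit the lexicographic order of
`List Bool`. -/
@[ext]
structure Vertex (T : BinTree) where
  path : List Bool
  mem_positions : path ∈ T.positions

namespace Vertex

variable {l r T : BinTree}

/-- Identifies `Vertex` with the subtype on which the labelings in `incLabelings` are defined. -/
def equivPositions (T : BinTree) : T.Vertex ≃ {p // p ∈ T.positions} where
  toFun v := ⟨v.path, v.mem_positions⟩
  invFun p := ⟨p.1, p.2⟩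

instance : Finite T.Vertex :=
  have := List.finite_toSet T.positions
  .of_equiv _ (equivPositions T).symm

instance : PartialOrder T.Vertex where
  le v w := v.path <+: w.path
  le_refl _ := List.prefix_rfl
  le_trans _ _ _ := List.IsPrefix.trans
  le_antisymm _ _ h h' := Vertex.ext (antisymm h h')

lemma le_def {v w : T.Vertex} : v ≤ w ↔ v.path <+: w.path := Iff.rfl

/-- The vertex of `node l r` corresponding to a vertex of `l`, a vertex of `r`, or the root `⊥`. -/
def ofNode : WithBot (l.Vertex ⊕ r.Vertex) → (node l r).Vertex
  | ⊥ => ⟨[], nil_mem_positions_node⟩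
  | (.inl v : l.Vertex ⊕ r.Vertex) =>
    ⟨false :: v.path, false_cons_mem_positions_node.2 v.mem_positions⟩
  | (.inr v : l.Vertex ⊕ r.Vertex) =>
    ⟨true :: v.path, true_cons_mem_positions_node.2 v.mem_positions⟩

lemma ofNode_le_ofNode (x y : WithBot (l.Vertex ⊕ r.Vertex)) :
    ofNode x ≤ ofNode y ↔ x ≤ y := by
  rcases x with _ | v | v <;> rcases y with _ | w | w <;>
    simp [le_def, ofNode, WithBot.none_eq_bot, WithBot.some_eq_coe]

lemma ofNode_surjective :
    Function.Surjective (ofNode : WithBot (l.Vertex ⊕ r.Vertex) → (node l r).Vertex) := by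
  rintro ⟨_ | ⟨_ | _, p⟩, h⟩
  · exact ⟨⊥, rfl⟩
  · exact ⟨(.inl ⟨p, false_cons_mem_positions_node.1 h⟩ : l.Vertex ⊕ r.Vertex), rfl⟩
  · exact ⟨(.inr ⟨p, true_cons_mem_positions_node.1 h⟩ : l.Vertex ⊕ r.Vertex), rfl⟩

variable (l r) in
/-- `ofNode` as an order isomorphism: the root lies below the disjoint union of the two subtrees. -/
noncomputable def nodeOrderIso : WithBot (l.Vertex ⊕ r.Vertex) ≃o (node l r).Vertex :=
  RelIso.ofSurjective (OrderEmbedding.ofMapLEIff ofNode ofNode_le_ofNode) ofNode_surjective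

instance : IsEmpty nil.Vertex := ⟨fun v ↦ by simpa [positions] using v.mem_positions⟩

end Vertex

lemma card_vertex (T : BinTree) : Nat.card T.Vertex = T.size := by
  induction T with
  | nil => simp [size]
  | node l r ihl ihr =>
    rw [← Nat.card_congr (Vertex.nodeOrderIso l r).toEquiv]
    exact Finite.card_option.trans (by rw [Nat.card_sum, ihl, ihr, size])

namespace Vertex

variable {T : BinTree} {v w : T.Vertex}

lemma lt_of_path_eq_append {b : Bool} (h : w.path = v.path ++ [b]) : v < w := by
  refine lt_of_le_of_ne (le_def.2 ⟨[b], h.symm⟩) ?_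
  rintro rfl
  simp at h

lemma exists_path_eq_append_of_covBy (h : v ⋖ w) : ∃ b, w.path = v.path ++ [b] := by
  obtain ⟨_ | ⟨b, t⟩, ht⟩ := le_def.1 h.le
  · exact absurd (Vertex.ext (by simpa using ht)) h.ne
  have child_isPrefix : v.path ++ [b] <+: w.path := ⟨t, by simpa using ht⟩
  let child : T.Vertex := ⟨v.path ++ [b], mem_positions_of_isPrefix child_isPrefix w.mem_positions⟩
  have v_lt_child : v < child := lt_of_path_eq_append rfl
  have child_eq : child = w :=
    (le_def.2 child_isPrefix : child ≤ w).eq_of_not_lt (h.2 v_lt_child)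
  exact ⟨b, child_eq ▸ rfl⟩

lemma strictMono_iff_forall_child {α : Type*} [Preorder α] (ℓ : T.Vertex → α) :
    StrictMono ℓ ↔ ∀ v w : T.Vertex, (∃ b, w.path = v.path ++ [b]) → ℓ v < ℓ w := by
  classical
  have := Fintype.ofFinite T.Vertex
  have : LocallyFiniteOrder T.Vertex := Fintype.toLocallyFiniteOrder
  refine ⟨fun hℓ v w ⟨_, hb⟩ ↦ hℓ (lt_of_path_eq_append hb), fun hℓ ↦ ?_⟩
  exact strictMono_iff_forall_covBy ℓ |>.2 fun v w h ↦ hℓ v w (exists_path_eq_append_of_covBy h)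

end Vertex

lemma incLabelings_eq_numIncLabelings (T : BinTree) :
    T.incLabelings = numIncLabelings T.Vertex := by
  rw [← card_incLabeling (α := Fin T.size) (by simp [card_vertex])]
  refine Nat.card_congr <| (Equiv.subtypeSubtypeEquivSubtypeInter _ _).symm.trans <|
    (Equiv.bijectiveEquiv.trans
      ((Vertex.equivPositions T).symm.equivCongr (.refl _))).subtypeEquiv fun ℓ ↦ ?_
  rw [Vertex.strictMono_iff_forall_child]
  exact ⟨fun h v w ↦ h (Vertex.equivPositions T v) (Vertex.equivPositions T w),
    fun h v w ↦ h ⟨v.1, v.2⟩ ⟨w.1, w.2⟩⟩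

lemma incLabelings_nil : nil.incLabelings = 1 := by
  rw [incLabelings_eq_numIncLabelings, numIncLabelings_of_isEmpty]

lemma incLabelings_node (l r : BinTree) :
    (node l r).incLabelings =
      (l.size + r.size).choose l.size * (l.incLabelings * r.incLabelings) := by
  simp only [incLabelings_eq_numIncLabelings]
  rw [← numIncLabelings_congr (Vertex.nodeOrderIso l r), numIncLabelings_withBot,
    numIncLabelings_sum, card_vertex, card_vertex]

end BinTree

section Binomial

open Finset

lemma sum_range_two_mul {M : Type*} [AddCommMonoid M] (f : ℕ → M) (n : ℕ) :
    ∑ i ∈ range (2 * n), f i = ∑ i ∈ range n, (f (2 * i) + f (2 * i + 1)) := by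
  induction n with
  | zero => simp
  | succ n ih =>
    rw [mul_add_one, sum_range_succ, sum_range_succ, ih, sum_range_succ, add_assoc]

lemma sum_choose_odd (n : ℕ) :
    ∑ i ∈ range (n + 1), (2 * n + 2).choose (2 * i + 1) = 2 ^ (2 * n + 1) :=
  calc ∑ i ∈ range (n + 1), (2 * n + 2).choose (2 * i + 1)
    _ = ∑ i ∈ range (n + 1), ((2 * n + 1).choose (2 * i) + (2 * n + 1).choose (2 * i + 1)) := rfl
    _ = ∑ i ∈ range (2 * n + 1 + 1), (2 * n + 1).choose i := (sum_range_two_mul _ (n + 1)).symm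
    _ = 2 ^ (2 * n + 1) := Nat.sum_range_choose _

end Binomial

namespace BinTree

lemma finite_setOf_size_le (n : ℕ) : {T : BinTree | T.size ≤ n}.Finite := by
  induction n with
  | zero => exact (Set.finite_singleton nil).subset fun T hT ↦ by cases T <;> simp_all [size]
  | succ n ih =>
    refine ((Set.finite_singleton nil).union (ih.image2 node ih)).subset ?_
    rintro (_ | ⟨l, r⟩) h
    · exact .inl rfl
    · have hlr : l.size + r.size ≤ n := by simpa [size] using h
      exact .inr ⟨l, show l.size ≤ n by lia, r, show r.size ≤ n by lia, rfl⟩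

/-- The set `B(n)` of binary trees with `n` vertices. -/
noncomputable def ofSize (n : ℕ) : Finset BinTree :=
  ((finite_setOf_size_le n).subset fun _ ↦ le_of_eq : {T : BinTree | T.size = n}.Finite).toFinset

@[simp]
lemma mem_ofSize {n : ℕ} {T : BinTree} : T ∈ ofSize n ↔ T.size = n := by
  simp [ofSize]

lemma ofSize_zero : ofSize 0 = {nil} := by
  ext T
  cases T <;> simp [size]

section Sums

open Finset

variable {M : Type*}

lemma tsum_size_eq_sum_ofSize [AddCommMonoid M] [TopologicalSpace M] (F : BinTree → M) (n : ℕ) :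
    ∑' T : {T : BinTree // T.size = n}, F T = ∑ T ∈ ofSize n, F T := by
  rw [← Finset.tsum_subtype, ← (Equiv.subtypeEquivRight fun _ ↦ mem_ofSize).tsum_eq]
  rfl

lemma sum_ofSize_succ [AddCommMonoid M] (F : BinTree → M) (n : ℕ) :
    ∑ T ∈ ofSize (n + 1), F T =
      ∑ ij ∈ antidiagonal n, ∑ lr ∈ ofSize ij.1 ×ˢ ofSize ij.2, F (node lr.1 lr.2) := by
  rw [sum_sigma']
  symm
  refine sum_nbij (fun x ↦ node x.2.1 x.2.2) ?_ ?_ ?_ fun _ _ ↦ rfl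
  · rintro ⟨⟨i, j⟩, l, r⟩ h
    simp_all [size]
  · rintro ⟨⟨i, j⟩, l, r⟩ h ⟨⟨i', j'⟩, l', r'⟩ h' hlr
    simp_all
  · rintro (_ | ⟨l, r⟩) h
    · simp [size] at h
    · exact ⟨⟨(l.size, r.size), l, r⟩, by simpa [size] using h, rfl⟩

/-- The total weight is that of a probability distribution: choose the sizes `(i, j)` of the two
subtrees with probability `c i j`, then the subtrees recursively and independently. -/
lemma sum_ofSize_eq_one [CommSemiring M] {w : BinTree → M} {c : ℕ → ℕ → M} (w_nil : w nil = 1)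
    (w_node : ∀ l r, w (node l r) = c l.size r.size * (w l * w r))
    (sum_c : ∀ n, ∑ ij ∈ antidiagonal n, c ij.1 ij.2 = 1) (n : ℕ) :
    ∑ T ∈ ofSize n, w T = 1 := by
  induction n using Nat.strong_induction_on with
  | _ n ih =>
  cases n with
  | zero => rw [ofSize_zero, sum_singleton, w_nil]
  | succ n =>
    rw [sum_ofSize_succ, ← sum_c n]
    refine sum_congr rfl fun ⟨i, j⟩ hij ↦ ?_
    have hij : i + j = n := mem_antidiagonal.1 hij
    calc ∑ lr ∈ ofSize i ×ˢ ofSize j, w (node lr.1 lr.2)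
      _ = ∑ lr ∈ ofSize i ×ˢ ofSize j, c i j * (w lr.1 * w lr.2) := by
        refine sum_congr rfl fun lr hlr ↦ ?_
        obtain ⟨hl, hr⟩ := mem_product.1 hlr
        rw [w_node, mem_ofSize.1 hl, mem_ofSize.1 hr]
      _ = c i j * ((∑ l ∈ ofSize i, w l) * ∑ r ∈ ofSize j, w r) := by
        rw [← mul_sum, sum_mul_sum, sum_product]
      _ = c i j := by rw [ih i (by lia), ih j (by lia), mul_one, mul_one]

end Sums

lemma size_completion (T : BinTree) : T.completion.size = 2 * T.size + 1 := by
  induction T with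
  | nil => rfl
  | node l r ihl ihr => rw [completion, size, ihl, ihr, size]; ring

lemma incLabelings_completion_nil : nil.completion.incLabelings = 1 := by
  simp [completion, incLabelings_node, incLabelings_nil, size]

lemma incLabelings_completion_node (l r : BinTree) :
    (node l r).completion.incLabelings =
      (2 * (l.size + r.size) + 2).choose (2 * l.size + 1) *
        (l.completion.incLabelings * r.completion.incLabelings) := by
  rw [completion, incLabelings_node, size_completion, size_completion]
  congr 2
  ring

/-- The summand of Han's formula: `f^{T̂} ∏_{v ∈ T} 1/2^{2h_v-1}`. -/
noncomputable def hanWeight (T : BinTree) : ℝ :=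
  T.completion.incLabelings * T.hookProd fun h ↦ 1 / (2 : ℝ) ^ (2 * h - 1)

/-- The factor contributed to `hanWeight` by a root whose subtrees have `i` and `j` vertices. -/
noncomputable def splitProb (i j : ℕ) : ℝ :=
  (2 * (i + j) + 2).choose (2 * i + 1) / 2 ^ (2 * (i + j) + 1)

lemma hanWeight_nil : hanWeight nil = 1 := by
  simp [hanWeight, incLabelings_completion_nil, hookProd]

lemma hanWeight_node (l r : BinTree) :
    hanWeight (node l r) = splitProb l.size r.size * (hanWeight l * hanWeight r) := by
  have hook_exponent : 2 * (l.size + r.size + 1) - 1 = 2 * (l.size + r.size) + 1 := by lia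
  simp only [hanWeight, splitProb, incLabelings_completion_node, hookProd, hook_exponent,
    Nat.cast_mul]
  ring

open Finset in
lemma sum_splitProb (n : ℕ) : ∑ ij ∈ antidiagonal n, splitProb ij.1 ij.2 = 1 :=
  calc ∑ ij ∈ antidiagonal n, splitProb ij.1 ij.2
    _ = ∑ ij ∈ antidiagonal n, ((2 * n + 2).choose (2 * ij.1 + 1) / 2 ^ (2 * n + 1) : ℝ) :=
      sum_congr rfl fun ij hij ↦ by rw [splitProb, mem_antidiagonal.1 hij]
    _ = ↑(∑ i ∈ range (n + 1), (2 * n + 2).choose (2 * i + 1)) / 2 ^ (2 * n + 1) := by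
      rw [← sum_div, Nat.sum_antidiagonal_eq_sum_range_succ_mk, Nat.cast_sum]
    _ = 1 := by
      rw [sum_choose_odd, Nat.cast_pow, Nat.cast_ofNat, div_self (by positivity)]

end BinTree

/-- For every positive integer `n`,
`∑_{T ∈ B(n)} f^{T̂} ∏_{v ∈ T} 1/2^{2h_v-1} = 1`, where `T̂` is the
completion of `T`, `f^{T̂}` its number of increasing labelings, and the hook
lengths `h_v` are computed in `T`. -/
theorem han_second_formula_rewritten (n : ℕ) (hn : 0 < n) :
    ∑' T : {T : BinTree // T.size = n},
      ((T : BinTree).completion.incLabelings : ℝ) *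
        (T : BinTree).hookProd (fun h => 1 / (2 : ℝ) ^ (2 * h - 1)) = 1 := by
  calc ∑' T : {T : BinTree // T.size = n}, (T : BinTree).hanWeight
    _ = ∑ T ∈ BinTree.ofSize n, T.hanWeight := BinTree.tsum_size_eq_sum_ofSize _ n
    _ = 1 := BinTree.sum_ofSize_eq_one
      BinTree.hanWeight_nil BinTree.hanWeight_node BinTree.sum_splitProb n
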